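/- arXiv:2503.14357 — 4 statements merged into one kernel-verified Lean document; each statement's English description precedes it below -/
import Mathlib

section
/- Fix natural numbers S and T with 1 ≤ T ≤ S. For every real S×S matrix K, every real number φ, and every k-medoids feasible solution (ϑ, ρ) on S points with T medoids, the kernel k-medoids cost of the diagonally shifted matrix satisfies ν(K + φ·I, ϑ) = ν(K, ϑ) + 2φ(S − T). -/
/-! The shift by `φ • 1` leaves each diagonal dissimilarity `K i i + K i i - 2 * K i i = 0` unchanged
and raises each off-diagonal one by `2 * φ`, so the cost grows by `2 * φ` times the number of points
assigned to another point. All entries of `ϑ` sum to `S` because its rows sum to `1`, and its trace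
is `∑ j, ρ j = T`, so that number is `S - T`. -/

/-- A k-medoids feasible solution on `S` points with `T` medoids. -/
def KMedoidsFeasible (S T : ℕ) (ϑ : Fin S → Fin S → ℝ) (ρ : Fin S → ℝ) : Prop :=
  (∀ i j, ϑ i j = 0 ∨ ϑ i j = 1) ∧
  (∀ j, ρ j = 0 ∨ ρ j = 1) ∧
  (∑ j, ρ j = (T : ℝ)) ∧
  (∀ i, ∑ j, ϑ i j = 1) ∧
  (∀ i j, ϑ i j ≤ ρ j) ∧
  (∀ j, ϑ j j = ρ j)

/-- The kernel k-medoids cost `ν(K, ϑ)`. -/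
def kernelKMedoidsCost (S : ℕ) (K : Matrix (Fin S) (Fin S) ℝ)
    (ϑ : Fin S → Fin S → ℝ) : ℝ :=
  ∑ i, ∑ j, (K i i + K j j - 2 * K i j) * ϑ i j

theorem shifted_cost (S T : ℕ) (hT : 1 ≤ T) (hTS : T ≤ S)
    (K : Matrix (Fin S) (Fin S) ℝ) (φ : ℝ)
    (ϑ : Fin S → Fin S → ℝ) (ρ : Fin S → ℝ)
    (hfeas : KMedoidsFeasible S T ϑ ρ) :
    kernelKMedoidsCost S (K + φ • (1 : Matrix (Fin S) (Fin S) ℝ)) ϑ =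
      kernelKMedoidsCost S K ϑ + 2 * φ * ((S : ℝ) - T) := by
  obtain ⟨-, -, hρ, hrow, -, hdiag⟩ := hfeas
  -- The shift adds `2φ` to every off-diagonal dissimilarity and nothing to the diagonal ones.
  have hterm : ∀ i j, ((K + φ • (1 : Matrix (Fin S) (Fin S) ℝ)) i i
      + (K + φ • (1 : Matrix (Fin S) (Fin S) ℝ)) j j
      - 2 * (K + φ • (1 : Matrix (Fin S) (Fin S) ℝ)) i j) * ϑ i j
      = (K i i + K j j - 2 * K i j) * ϑ i j
        + (2 * φ * ϑ i j - if i = j then 2 * φ * ϑ i j else 0) := by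
    intro i j
    by_cases h : i = j
    · subst h
      simp only [Matrix.add_apply, Matrix.smul_apply, Matrix.one_apply_eq, smul_eq_mul, if_true]
      ring
    · simp [h]
      ring
  -- The added terms sum to `2φ` times (total assignment `S` minus trace `T`).
  simp only [kernelKMedoidsCost, hterm, Finset.sum_add_distrib, Finset.sum_sub_distrib,
    Finset.sum_ite_eq, Finset.mem_univ, if_true, ← Finset.mul_sum, hrow, hdiag, hρ]
  simp
  ring
end

section
/- Fix natural numbers S and T with 1 ≤ T ≤ S, let K be any real S×S matrix and φ any real number. A k-medoids feasible solution (ϑ*, ρ*) on S points with T medoids minimizes the kernel k-medoids cost ν(K + φ·I, ·) over all k-medoids feasible solutions if and only if it minimizes ν(K, ·) over all k-medoids feasible solutions; that is, the optimal clustering assignments of the kernel k-medoids problem are invariant to a diagonal shift of the kernel matrix. -/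
/-- On feasible solutions the shift changes the cost by a constant: the diagonal entries of `φ • 1`
contribute `2φ` to every pair `i ≠ j` and `0` to every pair `i = j`, and exactly `S - T` of the `S`
assignments are off-diagonal, since the self-assigned points are the `T` medoids. -/
lemma kernelKMedoidsCost_shift {S T : ℕ} (K : Matrix (Fin S) (Fin S) ℝ) (φ : ℝ)
    {ϑ : Fin S → Fin S → ℝ} {ρ : Fin S → ℝ} (h : KMedoidsFeasible S T ϑ ρ) :
    kernelKMedoidsCost S (K + φ • (1 : Matrix (Fin S) (Fin S) ℝ)) ϑ =
      kernelKMedoidsCost S K ϑ + 2 * φ * ((S : ℝ) - T) := by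
  obtain ⟨-, -, hsum, hrow, -, hdiag⟩ := h
  have hterm : ∀ i j, ((K + φ • (1 : Matrix (Fin S) (Fin S) ℝ)) i i +
      (K + φ • (1 : Matrix (Fin S) (Fin S) ℝ)) j j -
      2 * (K + φ • (1 : Matrix (Fin S) (Fin S) ℝ)) i j) * ϑ i j =
      (K i i + K j j - 2 * K i j) * ϑ i j + 2 * φ * ϑ i j -
        2 * φ * (if i = j then ϑ i j else 0) := by
    intro i j
    simp only [Matrix.add_apply, Matrix.smul_apply, Matrix.one_apply, smul_eq_mul, if_true]
    split_ifs <;> ring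
  unfold kernelKMedoidsCost
  simp only [hterm, Finset.sum_sub_distrib, Finset.sum_add_distrib, ← Finset.mul_sum, hrow,
    Finset.sum_ite_eq, Finset.mem_univ, if_true, hdiag, hsum, Finset.sum_const,
    Finset.card_univ, Fintype.card_fin, nsmul_eq_mul]
  ring

/-- Optimal clustering assignments of the kernel k-medoids problem are invariant
to a diagonal shift of the kernel matrix. -/
theorem shift_invariant_minimizers (S T : ℕ) (hT : 1 ≤ T) (hTS : T ≤ S)
    (K : Matrix (Fin S) (Fin S) ℝ) (φ : ℝ)
    (ϑstar : Fin S → Fin S → ℝ) (ρstar : Fin S → ℝ)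
    (hfeas : KMedoidsFeasible S T ϑstar ρstar) :
    (∀ ϑ ρ, KMedoidsFeasible S T ϑ ρ →
        kernelKMedoidsCost S (K + φ • (1 : Matrix (Fin S) (Fin S) ℝ)) ϑstar ≤
          kernelKMedoidsCost S (K + φ • (1 : Matrix (Fin S) (Fin S) ℝ)) ϑ) ↔
      (∀ ϑ ρ, KMedoidsFeasible S T ϑ ρ →
        kernelKMedoidsCost S K ϑstar ≤ kernelKMedoidsCost S K ϑ) := by
  refine forall_congr' fun ϑ => forall_congr' fun ρ => forall_congr' fun h => ?_
  rw [kernelKMedoidsCost_shift K φ hfeas, kernelKMedoidsCost_shift K φ h, add_le_add_iff_right]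
end

section
/- Fix natural numbers S and T with 1 ≤ T ≤ S, let K be any real S×S matrix and φ any real number. The set of k-medoids feasible solutions on S points with T medoids is nonempty, and the infimum over all k-medoids feasible solutions (ϑ, ρ) of the kernel k-medoids cost ν(K + φ·I, ϑ) equals the infimum over all k-medoids feasible solutions of ν(K, ϑ) plus 2φ(S − T). -/
/-- The first `T` points are the medoids; every other point is assigned to point `0`. -/
lemma exists_feasible (S T : ℕ) (hT : 1 ≤ T) (hTS : T ≤ S) :
    ∃ ϑ ρ, KMedoidsFeasible S T ϑ ρ := by
  have hS : 0 < S := by omega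
  refine ⟨fun i j => if j = (if i.val < T then i else ⟨0, hS⟩) then 1 else 0,
    fun j => if j.val < T then 1 else 0, ?_, ?_, ?_, ?_, ?_, ?_⟩
  · intro i j
    dsimp only
    by_cases h : j = (if i.val < T then i else ⟨0, hS⟩) <;> simp [h]
  · intro j
    dsimp only
    by_cases h : j.val < T <;> simp [h]
  · rw [Fin.sum_univ_eq_sum_range (fun k => if k < T then (1 : ℝ) else 0) S,
      ← Finset.sum_filter]
    have : (Finset.range S).filter (· < T) = Finset.range T := by
      ext k
      simp only [Finset.mem_filter, Finset.mem_range]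
      omega
    rw [this]
    simp
  · intro i
    simp
  · intro i j
    dsimp only
    by_cases hi : i.val < T
    · by_cases h : j = i
      · subst h
        simp [hi]
      · simp only [hi, if_true, h, if_false]
        split_ifs <;> norm_num
    · by_cases h : j = ⟨0, hS⟩
      · subst h
        have h0 : 0 < T := hT
        simp [hi, h0]
      · simp only [hi, if_false, h]
        split_ifs <;> norm_num
  · intro j
    dsimp only
    by_cases hj : j.val < T
    · simp [hj]
    · have h : j ≠ ⟨0, hS⟩ := by
        rintro rfl
        exact hj hT
      simp [hj, h]

lemma cost_shift (S T : ℕ) (K : Matrix (Fin S) (Fin S) ℝ) (φ : ℝ)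
    (ϑ : Fin S → Fin S → ℝ) (ρ : Fin S → ℝ) (h : KMedoidsFeasible S T ϑ ρ) :
    kernelKMedoidsCost S (K + φ • (1 : Matrix (Fin S) (Fin S) ℝ)) ϑ =
      kernelKMedoidsCost S K ϑ + 2 * φ * ((S : ℝ) - T) := by
  obtain ⟨-, -, hρ, hrow, -, hdiag⟩ := h
  have hrow_shift : ∀ i, ∑ j, ((K + φ • (1 : Matrix (Fin S) (Fin S) ℝ)) i i
      + (K + φ • (1 : Matrix (Fin S) (Fin S) ℝ)) j j
      - 2 * (K + φ • (1 : Matrix (Fin S) (Fin S) ℝ)) i j) * ϑ i j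
      = ∑ j, (K i i + K j j - 2 * K i j) * ϑ i j + 2 * φ * (1 - ρ i) := by
    intro i
    have hd : ∑ j, (if i = j then ϑ i j else 0) = ρ i := by simp [hdiag]
    rw [← hrow i, ← hd, ← Finset.sum_sub_distrib, Finset.mul_sum, ← Finset.sum_add_distrib]
    refine Finset.sum_congr rfl fun j _ => ?_
    simp only [Matrix.add_apply, Matrix.smul_apply, Matrix.one_apply, smul_eq_mul, if_true]
    split_ifs <;> ring
  unfold kernelKMedoidsCost
  rw [Finset.sum_congr rfl fun i _ => hrow_shift i, Finset.sum_add_distrib, ← Finset.mul_sum,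
    Finset.sum_sub_distrib, hρ]
  simp

lemma bddBelow_costs (S T : ℕ) (K : Matrix (Fin S) (Fin S) ℝ) :
    BddBelow {c : ℝ | ∃ ϑ ρ, KMedoidsFeasible S T ϑ ρ ∧ c = kernelKMedoidsCost S K ϑ} := by
  refine ⟨∑ i, ∑ j, -|K i i + K j j - 2 * K i j|, ?_⟩
  rintro c ⟨ϑ, ρ, h, rfl⟩
  refine Finset.sum_le_sum fun i _ => Finset.sum_le_sum fun j _ => ?_
  rcases h.1 i j with h0 | h1
  · simp [h0]
  · rw [h1, mul_one]
    exact neg_abs_le _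

theorem shifted_infimum (S T : ℕ) (hT : 1 ≤ T) (hTS : T ≤ S)
    (K : Matrix (Fin S) (Fin S) ℝ) (φ : ℝ) :
    (∃ ϑ ρ, KMedoidsFeasible S T ϑ ρ) ∧
    sInf {c : ℝ | ∃ ϑ ρ, KMedoidsFeasible S T ϑ ρ ∧
        c = kernelKMedoidsCost S (K + φ • (1 : Matrix (Fin S) (Fin S) ℝ)) ϑ} =
      sInf {c : ℝ | ∃ ϑ ρ, KMedoidsFeasible S T ϑ ρ ∧
        c = kernelKMedoidsCost S K ϑ} + 2 * φ * ((S : ℝ) - T) := by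
  have hex := exists_feasible S T hT hTS
  refine ⟨hex, ?_⟩
  obtain ⟨ϑ₀, ρ₀, h₀⟩ := hex
  have hne : {c : ℝ | ∃ ϑ ρ, KMedoidsFeasible S T ϑ ρ ∧
      c = kernelKMedoidsCost S K ϑ}.Nonempty := ⟨_, ϑ₀, ρ₀, h₀, rfl⟩
  have hinf := (OrderIso.addRight (2 * φ * ((S : ℝ) - T))).map_csInf' hne (bddBelow_costs S T K)
  rw [OrderIso.addRight_apply] at hinf
  rw [hinf]
  congr 1
  ext c
  constructor
  · rintro ⟨ϑ, ρ, h, rfl⟩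
    exact ⟨_, ⟨ϑ, ρ, h, rfl⟩, (cost_shift S T K φ ϑ ρ h).symm⟩
  · rintro ⟨_, ⟨ϑ, ρ, h, rfl⟩, rfl⟩
    exact ⟨ϑ, ρ, h, (cost_shift S T K φ ϑ ρ h).symm⟩
end

section
/- Let S and d be natural numbers, let y : Fin S → EuclideanSpace ℝ (Fin d) be a family of points, and let γ ≥ 0 be a real number. Then the exponential kernel matrix K with entries K i j = exp(−γ · ‖y i − y j‖²) is positive semidefinite. -/
/-!
Expanding `‖x - y‖² = ‖x‖² + ‖y‖² - 2⟪x, y⟫` writes the kernel as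
`g i * g j * exp (2γ⟪y i, y j⟫)` with `g i = exp (-γ‖y i‖²)`, and the factors `g i` can be absorbed
into the test vector. What remains is the entrywise exponential of a nonnegative multiple of a
Gram matrix. It is positive semidefinite because, by the Schur product theorem
(`Matrix.PosSemidef.hadamard`), so is every entrywise power, and the exponential series has
nonnegative coefficients.
-/

/-- Entrywise powers of a positive semidefinite matrix are positive semidefinite; for exponent `0`
this is the all-ones matrix. -/
lemma posSemidef_entrywise_pow {S : ℕ} {A : Matrix (Fin S) (Fin S) ℝ} (hA : A.PosSemidef) (n : ℕ) :
    (Matrix.of fun i j => A i j ^ n : Matrix (Fin S) (Fin S) ℝ).PosSemidef := by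
  induction n with
  | zero =>
    convert Matrix.posSemidef_vecMulVec_self_star (fun _ : Fin S => (1 : ℝ)) using 1
    ext i j
    simp [Matrix.vecMulVec_apply]
  | succ n ih =>
    have h : (Matrix.of fun i j => A i j ^ (n + 1) : Matrix (Fin S) (Fin S) ℝ) =
        Matrix.hadamard (Matrix.of fun i j => A i j ^ n) A := by
      ext i j
      simp [pow_succ]
    rw [h]
    exact ih.hadamard hA

lemma posSemidef_iff_sum_nonneg {S : ℕ} {A : Matrix (Fin S) (Fin S) ℝ} :
    A.PosSemidef ↔ (∀ i j, A i j = A j i) ∧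
      ∀ c : Fin S → ℝ, 0 ≤ ∑ i, ∑ j, c i * c j * A i j := by
  have hsum (c : Fin S → ℝ) :
      star c ⬝ᵥ A.mulVec c = ∑ i, ∑ j, c i * c j * A i j := by
    simp only [dotProduct, Matrix.mulVec, Finset.mul_sum, Pi.star_apply, star_trivial]
    exact Finset.sum_congr rfl fun i _ => Finset.sum_congr rfl fun j _ => by ring
  rw [Matrix.posSemidef_iff_dotProduct_mulVec, Matrix.IsHermitian.ext_iff]
  simp only [hsum]
  exact ⟨fun h => ⟨fun i j => h.1 j i, h.2⟩, fun h => ⟨fun i j => h.1 j i, h.2⟩⟩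

lemma sum_exp_nonneg {S : ℕ} {A : Matrix (Fin S) (Fin S) ℝ} (hA : A.PosSemidef)
    (c : Fin S → ℝ) : 0 ≤ ∑ i, ∑ j, c i * c j * Real.exp (A i j) := by
  have hs : HasSum (fun n : ℕ => ∑ i, ∑ j, c i * c j * (A i j ^ n / (n.factorial : ℝ)))
      (∑ i, ∑ j, c i * c j * Real.exp (A i j)) := by
    refine hasSum_sum fun i _ => hasSum_sum fun j _ => HasSum.mul_left _ ?_
    rw [Real.exp_eq_exp_ℝ]
    exact NormedSpace.expSeries_div_hasSum_exp (A i j)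
  refine hs.nonneg fun n => ?_
  have h := (posSemidef_iff_sum_nonneg.1 (posSemidef_entrywise_pow hA n)).2 c
  have h' := div_nonneg h (Nat.cast_nonneg (α := ℝ) n.factorial)
  simpa only [Finset.sum_div, mul_div_assoc, Matrix.of_apply] using h'

/-- The exponential kernel matrix of a family of points in Euclidean space with
parameter `γ ≥ 0` is positive semidefinite. -/
theorem exp_kernel_posSemidef (S d : ℕ) (y : Fin S → EuclideanSpace ℝ (Fin d))
    (γ : ℝ) (hγ : 0 ≤ γ) :
    (Matrix.of fun i j => Real.exp (-γ * ‖y i - y j‖ ^ 2) :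
      Matrix (Fin S) (Fin S) ℝ).PosSemidef := by
  refine posSemidef_iff_sum_nonneg.2 ⟨fun i j => ?_, fun c => ?_⟩
  · simp only [Matrix.of_apply, norm_sub_rev (y i)]
  have hG : ((2 * γ) • Matrix.gram ℝ y).PosSemidef :=
    (Matrix.posSemidef_gram ℝ y).smul (by positivity)
  refine (sum_exp_nonneg hG fun i => c i * Real.exp (-γ * ‖y i‖ ^ 2)).trans_eq
    (Finset.sum_congr rfl fun i _ => Finset.sum_congr rfl fun j _ => ?_)
  have hexp : Real.exp (-γ * ‖y i - y j‖ ^ 2) = Real.exp (-γ * ‖y i‖ ^ 2) *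
      Real.exp (-γ * ‖y j‖ ^ 2) * Real.exp (2 * γ * inner ℝ (y i) (y j)) := by
    rw [← Real.exp_add, ← Real.exp_add, norm_sub_sq_real]
    ring_nf
  simp only [Matrix.of_apply, Matrix.smul_apply, Matrix.gram_apply, smul_eq_mul, hexp]
  ring
end
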